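/- Let Λ ⊂ ℝ^N be a full-rank lattice with Voronoi region of volume V(Λ), per-dimension second moment P(Λ) = S_x under the uniform distribution, and normalized second moment G(Λ) = P(Λ)/V(Λ)^{2/N}. For the mod-Λ additive noise channel Z = V + E_f mod Λ with noise per-dimension energy S_{e,f}, the capacity C(Λ,f) = (1/N)(log₂ V(Λ) - h(E_f mod Λ)) satisfies C(Λ,f) ≥ (1/2)log₂(S_x/S_{e,f}) - (1/2)log₂(2πe·G(Λ)). -/

import Mathlib

open MeasureTheory
open scoped ENNReal

/-- Differential entropy (in bits) of a density `g` on `ℝ^N`. -/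
noncomputable def diffEntropy {n : ℕ} (g : EuclideanSpace ℝ (Fin n) → ℝ≥0∞) : ℝ :=
  -∫ x, (g x).toReal * Real.logb 2 (g x).toReal

lemma lattice_exp_sum_bound {n : ℕ} (Λ : AddSubgroup (EuclideanSpace ℝ (Fin n)))
    [hd : DiscreteTopology Λ]
    (hspan : Submodule.span ℝ (Λ : Set (EuclideanSpace ℝ (Fin n))) = ⊤) :
    ∃ M : ℝ≥0∞, M ≠ ⊤ ∧ ∀ x : EuclideanSpace ℝ (Fin n),
      ∑' l : Λ, ENNReal.ofReal (Real.exp (-‖x + (l : EuclideanSpace ℝ (Fin n))‖)) ≤ M := by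
  let L : Submodule ℤ (EuclideanSpace ℝ (Fin n)) := AddSubgroup.toIntSubmodule Λ
  have : DiscreteTopology L := hd
  have : IsZLattice ℝ L := ⟨hspan⟩
  have hs : Summable (fun l : L => Real.exp (-‖l‖)) := by
    have h0 := ZLattice.summable_norm_pow_inv L (Module.finrank ℤ L + 1) (Nat.lt_succ_self _)
    refine Summable.of_norm_bounded_eventually
      (h0.mul_left ((Module.finrank ℤ L + 1).factorial : ℝ)) ?_
    refine (Set.finite_singleton (0 : L)).subset ?_
    intro z hz
    by_contra hz0
    apply hz
    have hz0 : 0 < ‖z‖ := norm_pos_iff.mpr hz0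
    have := Real.pow_div_factorial_le_exp ‖z‖ hz0.le (Module.finrank ℤ L + 1)
    show ‖Real.exp (-‖z‖)‖ ≤ _
    rw [Real.norm_of_nonneg (Real.exp_pos _).le, Real.exp_neg, inv_pow, ← div_eq_mul_inv,
      ← inv_div]
    exact inv_anti₀ (by positivity) this
  obtain ⟨R, hR⟩ : ∃ R : ℝ, ∀ x : EuclideanSpace ℝ (Fin n), ∃ l : L, ‖x - l‖ ≤ R := by
    have : Module.Finite ℤ L := ZLattice.module_finite ℝ L
    have : Module.Free ℤ L := ZLattice.module_free ℝ L
    let b0 := Module.Free.chooseBasis ℤ L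
    let b := b0.ofZLatticeBasis ℝ L
    refine ⟨∑ i, ‖b i‖, fun x => ?_⟩
    have hm : (ZSpan.floor b x : EuclideanSpace ℝ (Fin n)) ∈ L := by
      exact (b0.ofZLatticeBasis_span ℝ).le (ZSpan.floor b x).2
    exact ⟨⟨_, hm⟩, ZSpan.norm_fract_le b x⟩
  refine ⟨ENNReal.ofReal (Real.exp R) * ∑' l : L, ENNReal.ofReal (Real.exp (-‖l‖)), ?_, ?_⟩
  · exact ENNReal.mul_ne_top ENNReal.ofReal_ne_top hs.tsum_ofReal_ne_top
  · intro x
    obtain ⟨l0, hl0⟩ := hR x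
    rw [← ENNReal.tsum_mul_left, ← (Equiv.addLeft l0).tsum_eq (fun l : L => _ * _)]
    refine ENNReal.tsum_le_tsum fun l => ?_
    rw [← ENNReal.ofReal_mul (Real.exp_pos _).le, ← Real.exp_add]
    refine ENNReal.ofReal_le_ofReal (Real.exp_le_exp.mpr ?_)
    have : ‖((l0 : EuclideanSpace ℝ (Fin n)) + l)‖ ≤ ‖x + l‖ + ‖x - l0‖ := by
      rw [show (l0 : EuclideanSpace ℝ (Fin n)) + l = (x + l) - (x - l0) by abel]
      exact norm_sub_le _ _
    have e : ‖(Equiv.addLeft l0) l‖ = ‖((l0 : EuclideanSpace ℝ (Fin n)) + l)‖ := rfl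
    rw [e]; linarith

lemma fold_isFund {n : ℕ} (Λ : AddSubgroup (EuclideanSpace ℝ (Fin n)))
    (F : Set (EuclideanSpace ℝ (Fin n))) (hF : MeasurableSet F)
    (hfund : ∀ x : EuclideanSpace ℝ (Fin n),
      ∃! p : EuclideanSpace ℝ (Fin n) × EuclideanSpace ℝ (Fin n),
        p.1 ∈ Λ ∧ p.2 ∈ F ∧ x = p.1 + p.2) : IsAddFundamentalDomain Λ F volume := by
  refine IsAddFundamentalDomain.mk' hF.nullMeasurableSet fun x => ?_
  obtain ⟨⟨p, q⟩, ⟨hp, hq, hx⟩, hu⟩ := hfund x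
  refine ⟨⟨-p, Λ.neg_mem hp⟩, ?_, ?_⟩
  · show -p + x ∈ F
    rw [hx]; simpa using hq
  · rintro ⟨l, hl⟩ hlF
    have := hu (-l, l + x) ⟨Λ.neg_mem hl, hlF, by simp⟩
    have h1 : -l = p := congrArg Prod.fst this
    exact Subtype.ext (by simp [← h1])

lemma fold_lintegral {n : ℕ} (Λ : AddSubgroup (EuclideanSpace ℝ (Fin n))) [Countable Λ]
    {F : Set (EuclideanSpace ℝ (Fin n))} (h : IsAddFundamentalDomain Λ F volume)
    (f : EuclideanSpace ℝ (Fin n) → ℝ≥0∞) (hf : AEMeasurable f) :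
    ∫⁻ x, f x = ∫⁻ x in F, ∑' l : Λ, f (x + l) := by
  rw [h.lintegral_eq_tsum'', lintegral_tsum]
  · refine tsum_congr fun l => lintegral_congr fun x => ?_
    rw [add_comm]; rfl
  · intro l
    exact (hf.comp_quasiMeasurePreserving
      (measurePreserving_add_right volume (l : EuclideanSpace ℝ (Fin n))).quasiMeasurePreserving).restrict

lemma fold_integral {n : ℕ} (Λ : AddSubgroup (EuclideanSpace ℝ (Fin n))) [Countable Λ]
    {F : Set (EuclideanSpace ℝ (Fin n))} (h : IsAddFundamentalDomain Λ F volume)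
    (f : EuclideanSpace ℝ (Fin n) → ℝ) (hf : Integrable f) :
    ∫ x, f x = ∫ x in F, ∑' l : Λ, f (x + l) := by
  rw [h.integral_eq_tsum'' _ hf, integral_tsum]
  · refine tsum_congr fun l => integral_congr_ae (Filter.Eventually.of_forall fun x => ?_)
    show f (l + x) = _
    rw [add_comm]
  · intro l
    exact (hf.1.comp_quasiMeasurePreserving
      (measurePreserving_add_right volume (l : EuclideanSpace ℝ (Fin n))).quasiMeasurePreserving).restrict
  · have := h.lintegral_eq_tsum'' (fun x => ‖f x‖ₑ)
    have h2 : ∑' l : Λ, ∫⁻ x in F, ‖f (x + l)‖ₑ = ∫⁻ x, ‖f x‖ₑ := by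
      rw [this]
      refine tsum_congr fun l => lintegral_congr fun x => ?_
      rw [add_comm]; rfl
    rw [h2]; exact hf.2.ne

lemma fold_integrable {n : ℕ} (Λ : AddSubgroup (EuclideanSpace ℝ (Fin n))) [Countable Λ]
    {F : Set (EuclideanSpace ℝ (Fin n))} (h : IsAddFundamentalDomain Λ F volume)
    (f : EuclideanSpace ℝ (Fin n) → ℝ) (hf : Integrable f)
    (k : EuclideanSpace ℝ (Fin n) → ℝ) (hk : AEStronglyMeasurable k (volume.restrict F))
    (hfk : ∀ᵐ x ∂(volume.restrict F), HasSum (fun l : Λ => f (x + l)) (k x)) :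
    IntegrableOn k F := by
  refine ⟨hk, ?_⟩
  have h1 := fold_lintegral Λ h (fun x => ‖f x‖ₑ) hf.1.enorm
  refine lt_of_le_of_lt ?_ (h1.symm.trans_lt hf.2)
  refine lintegral_mono_ae ?_
  filter_upwards [hfk] with x hx
  rw [← hx.tsum_eq]
  exact enorm_tsum_le_tsum_enorm

lemma gibbs_pt {a b : ℝ} (ha : 0 ≤ a) (hb : 0 < b) :
    a * Real.log b + a - b ≤ a * Real.log a := by
  rcases ha.eq_or_lt with rfl | ha
  · simp; exact hb.le
  · have h := Real.log_le_sub_one_of_pos (div_pos hb ha)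
    rw [Real.log_div hb.ne' ha.ne'] at h
    have h2 := mul_le_mul_of_nonneg_left h ha.le
    have h3 : a * (b / a - 1) = b - a := by field_simp
    rw [h3] at h2; linarith

lemma fold_core {n : ℕ} (Λ : AddSubgroup (EuclideanSpace ℝ (Fin n))) [Countable Λ]
    {F : Set (EuclideanSpace ℝ (Fin n))} (h : IsAddFundamentalDomain Λ F volume)
    (M : ℝ≥0∞) (hM : M ≠ ⊤) (hMb : ∀ x : EuclideanSpace ℝ (Fin n),
      ∑' l : Λ, ENNReal.ofReal (Real.exp (-‖x + (l : EuclideanSpace ℝ (Fin n))‖)) ≤ M)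
    (g : EuclideanSpace ℝ (Fin n) → ℝ≥0∞) (hg : Measurable g) (hg1 : ∫⁻ x, g x = 1)
    (hgn : Integrable (fun x => (g x).toReal * ‖x‖))
    (hgl : Integrable (fun x => (g x).toReal * Real.log (g x).toReal)) 
    (A : EuclideanSpace ℝ (Fin n) → ℝ≥0∞) (hA : A = fun x => ∑' l : Λ, g (x + l)) :
    (∫⁻ x in F, A x = 1) ∧ 
    IntegrableOn (fun x => (A x).toReal * Real.log (A x).toReal) F ∧
    ∫ x, (g x).toReal * Real.log (g x).toReal ≤ 
      ∫ x in F, (A x).toReal * Real.log (A x).toReal := by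
  have hAm : Measurable A := by
    rw [hA]
    exact Measurable.tsum fun l => hg.comp (measurable_id.add_const _)
  have hA1 : ∫⁻ x in F, A x = 1 := by
    rw [hA, ← fold_lintegral Λ h g hg.aemeasurable, hg1]
  have hAinv : ∀ (l : Λ) x, A (x + l) = A x := by
    intro l x
    rw [hA]
    show ∑' l' : Λ, g (x + l + l') = ∑' l' : Λ, g (x + l')
    rw [← (Equiv.addLeft l).tsum_eq (fun l' : Λ => g (x + l'))]
    refine tsum_congr fun l' => ?_
    simp [add_assoc]
  have hAfin : ∀ᵐ x, A x < ⊤ := by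
    rw [ae_iff]
    refine h.measure_zero_of_invariant _ ?_ ?_
    · intro l
      ext x
      rw [Set.mem_vadd_set_iff_neg_vadd_mem]
      show ¬ A (((-l : Λ) : EuclideanSpace ℝ (Fin n)) + x) < ⊤ ↔ ¬ A x < ⊤
      rw [add_comm, hAinv]
    · have := ae_lt_top hAm (μ := volume.restrict F) (by rw [hA1]; simp)
      rw [ae_iff, Measure.restrict_apply] at this
      · exact this
      · exact (measurableSet_lt hAm measurable_const).compl
  have hgA : ∀ x, g x ≤ A x := by
    intro x
    rw [hA]
    have := ENNReal.le_tsum (f := fun l : Λ => g (x + l)) 0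
    simpa using this
  -- the dominating term
  have hAφ : Integrable (fun x => (A x).toReal * Real.exp (-‖x‖)) := by
    refine ⟨by fun_prop, ?_⟩
    have h1 : ∫⁻ x, A x * ENNReal.ofReal (Real.exp (-‖x‖)) ≤ M := by
      rw [fold_lintegral Λ h _ (by fun_prop)]
      calc _ ≤ ∫⁻ x in F, A x * M := by
            refine lintegral_mono fun x => ?_
            simp only [hAinv]
            rw [ENNReal.tsum_mul_left]
            gcongr
            exact hMb x
        _ = M := by rw [lintegral_mul_const _ hAm, hA1, one_mul]
    refine lt_of_le_of_lt (lintegral_mono_ae ?_) (h1.trans_lt hM.lt_top)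
    filter_upwards [hAfin] with x hx
    rw [Real.enorm_of_nonneg (by positivity), ENNReal.ofReal_mul ENNReal.toReal_nonneg,
      ENNReal.ofReal_toReal hx.ne]
  have hlow : ∀ᵐ x, (g x).toReal * Real.log (g x).toReal ≤ (g x).toReal * Real.log (A x).toReal := by
    filter_upwards [hAfin] with x hx
    rcases (ENNReal.toReal_nonneg (a := g x)).eq_or_lt with h0 | h0
    · simp [← h0]
    · have := ENNReal.toReal_mono hx.ne (hgA x)
      gcongr
  have hup : ∀ᵐ x, (g x).toReal * Real.log (A x).toReal ≤ (g x).toReal * Real.log (g x).toReal +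
      (g x).toReal * ‖x‖ + (A x).toReal * Real.exp (-‖x‖) := by
    filter_upwards [hAfin] with x hx
    rcases (ENNReal.toReal_nonneg (a := g x)).eq_or_lt with h0 | h0
    · simp [← h0]; positivity
    · have h1 := ENNReal.toReal_mono hx.ne (hgA x)
      have h2 : 0 < (A x).toReal := h0.trans_le h1
      have := gibbs_pt h0.le (mul_pos h2 (Real.exp_pos (-‖x‖)))
      rw [Real.log_mul h2.ne' (Real.exp_pos _).ne', Real.log_exp] at this
      linarith
  have hk : Integrable (fun x => (g x).toReal * Real.log (A x).toReal) := by
    refine integrable_of_le_of_le ?_ hlow hup hgl ((hgl.add hgn).add hAφ)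
    exact (by fun_prop : Measurable fun x => (g x).toReal * Real.log (A x).toReal).aestronglyMeasurable
  have hsum : ∀ᵐ x ∂(volume.restrict F),
      HasSum (fun l : Λ => (g (x + l)).toReal * Real.log (A (x + l)).toReal)
        ((A x).toReal * Real.log (A x).toReal) := by
    filter_upwards [ae_restrict_of_ae hAfin] with x hx
    simp only [hAinv]
    refine HasSum.mul_right _ ?_
    have hx' : ∑' l : Λ, g (x + l) ≠ ⊤ := by rw [hA] at hx; exact hx.ne
    have := ENNReal.hasSum_toReal hx'
    rw [← ENNReal.tsum_toReal_eq (fun l => ENNReal.ne_top_of_tsum_ne_top hx' l)] at this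
    rwa [hA]
  refine ⟨hA1, fold_integrable Λ h _ hk _ (Measurable.aestronglyMeasurable (by fun_prop)) hsum, ?_⟩
  have e : ∫ x in F, (A x).toReal * Real.log (A x).toReal = 
      ∫ x, (g x).toReal * Real.log (A x).toReal := by
    rw [fold_integral Λ h _ hk]
    refine integral_congr_ae ?_
    filter_upwards [hsum] with x hx
    exact hx.tsum_eq.symm
  rw [e]
  exact integral_mono_ae hgl hk hlow

lemma gauss_entropy {n : ℕ} (g : EuclideanSpace ℝ (Fin n) → ℝ≥0∞) (hg : Measurable g)
    (hg1 : ∫⁻ x, g x = 1)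
    (hgn : Integrable (fun x => (g x).toReal * ‖x‖ ^ 2))
    (hgl : Integrable (fun x => (g x).toReal * Real.log (g x).toReal)) 
    (S : ℝ) (hS : 0 < S) (hSm : ∫ x, (g x).toReal * ‖x‖ ^ 2 = n * S) :
    -(n / 2) * Real.log (2 * Real.pi * Real.exp 1 * S) ≤
      ∫ x, (g x).toReal * Real.log (g x).toReal := by
  have hpi := Real.pi_pos
  have hb : 0 < 1 / (2 * S) := by positivity
  have hG := GaussianFourier.integral_rexp_neg_mul_sq_norm (V := EuclideanSpace ℝ (Fin n)) hb
  rw [finrank_euclideanSpace_fin] at hG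
  have e1 : Real.pi / (1 / (2 * S)) = 2 * Real.pi * S := by field_simp
  rw [e1] at hG
  set Z : ℝ := (2 * Real.pi * S) ^ ((n : ℝ) / 2) with hZ
  have hZ0 : 0 < Z := by positivity
  have hGi : Integrable (fun v : EuclideanSpace ℝ (Fin n) => Real.exp (-(1 / (2 * S)) * ‖v‖ ^ 2)) := by
    by_contra hc
    rw [integral_undef hc] at hG
    exact hZ0.ne hG
  have hgi : Integrable (fun x => (g x).toReal) :=
    integrable_toReal_of_lintegral_ne_top hg.aemeasurable (by rw [hg1]; simp)
  have hgI : ∫ x, (g x).toReal = 1 := by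
    rw [integral_toReal hg.aemeasurable (ae_lt_top hg (by rw [hg1]; simp)), hg1]; simp
  have hpt : ∀ x, (g x).toReal * (1 - Real.log Z) - (1 / (2 * S)) * ((g x).toReal * ‖x‖ ^ 2) 
      - Z⁻¹ * Real.exp (-(1 / (2 * S)) * ‖x‖ ^ 2) ≤ (g x).toReal * Real.log (g x).toReal := by
    intro x
    have := gibbs_pt (a := (g x).toReal) ENNReal.toReal_nonneg 
      (mul_pos (inv_pos.mpr hZ0) (Real.exp_pos (-(1 / (2 * S)) * ‖x‖ ^ 2)))
    rw [Real.log_mul (inv_pos.mpr hZ0).ne' (Real.exp_pos _).ne', Real.log_exp, Real.log_inv] at this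
    linarith
  have hi1 := hgi.mul_const (1 - Real.log Z)
  have hi2 := hgn.const_mul (1 / (2 * S))
  have hi3 := hGi.const_mul Z⁻¹
  have hI := integral_mono ((hi1.sub hi2).sub hi3) hgl hpt
  refine le_trans (le_of_eq ?_) hI
  have : ∫ x, ((g x).toReal * (1 - Real.log Z) - (1 / (2 * S)) * ((g x).toReal * ‖x‖ ^ 2) 
      - Z⁻¹ * Real.exp (-(1 / (2 * S)) * ‖x‖ ^ 2)) = 
      1 * (1 - Real.log Z) - (1 / (2 * S)) * (n * S) - Z⁻¹ * Z := by
    refine (integral_sub (hi1.sub hi2) hi3).trans ?_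
    rw [integral_sub' hi1 hi2, integral_mul_const,
      integral_const_mul, integral_const_mul, hgI, hSm, hG]
  refine Eq.trans ?_ this.symm
  rw [inv_mul_cancel₀ hZ0.ne', hZ, Real.log_rpow (by positivity),
    show 2 * Real.pi * Real.exp 1 * S = (2 * Real.pi * S) * Real.exp 1 by ring,
    Real.log_mul (by positivity) (by positivity), Real.log_exp]
  field_simp
  ring

lemma unif_entropy {n : ℕ} {F : Set (EuclideanSpace ℝ (Fin n))}
    (hvol : 0 < volume F) (hvol' : volume F < ⊤)
    (A : EuclideanSpace ℝ (Fin n) → ℝ≥0∞) (hA : Measurable A) (hA1 : ∫⁻ x in F, A x = 1)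
    (hAl : IntegrableOn (fun x => (A x).toReal * Real.log (A x).toReal) F) :
    -Real.log (volume F).toReal ≤ ∫ x in F, (A x).toReal * Real.log (A x).toReal := by
  have hV : 0 < (volume F).toReal := ENNReal.toReal_pos hvol.ne' hvol'.ne
  set V := (volume F).toReal
  have hgi : IntegrableOn (fun x => (A x).toReal) F :=
    integrable_toReal_of_lintegral_ne_top hA.aemeasurable (by rw [hA1]; simp)
  have hgI : ∫ x in F, (A x).toReal = 1 := by
    rw [integral_toReal hA.aemeasurable (ae_lt_top hA (by rw [hA1]; simp)), hA1]; simp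
  have hc : IntegrableOn (fun _ : EuclideanSpace ℝ (Fin n) => V⁻¹) F := 
    integrableOn_const hvol'.ne
  have hI := integral_mono ((hgi.mul_const (1 - Real.log V)).sub hc) hAl (fun x => by
    have := gibbs_pt (a := (A x).toReal) ENNReal.toReal_nonneg (inv_pos.mpr hV)
    rw [Real.log_inv] at this
    show (A x).toReal * (1 - Real.log V) - V⁻¹ ≤ _
    linarith)
  refine le_trans (le_of_eq ?_) hI
  refine Eq.trans ?_ (integral_sub (hgi.mul_const (1 - Real.log V)) hc).symm
  rw [integral_mul_const, hgI, setIntegral_const, measureReal_def, smul_eq_mul,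
    mul_inv_cancel₀ hV.ne']
  ring

/-- **Mod-Λ channel capacity lower bound.** For the mod-Λ additive noise channel
`Z = V + E_f mod Λ`, with `V(Λ)` the covolume, `Sₓ = P(Λ)` the per-dimension second
moment of the Voronoi (fundamental) region, `G(Λ) = Sₓ/V(Λ)^{2/N}` the normalized second
moment, and `S_{e,f}` the per-dimension energy of the noise `E_f`, the capacity
`C(Λ,f) = (1/N)(log₂ V(Λ) - h(E_f mod Λ))` satisfies
`C(Λ,f) ≥ (1/2)log₂(Sₓ/S_{e,f}) - (1/2)log₂(2πe·G(Λ))`. -/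
theorem mod_lattice_capacity_lower_bound
    {Ω : Type*} [MeasurableSpace Ω] (μ : Measure Ω) [IsProbabilityMeasure μ]
    (n : ℕ) (hn : 0 < n) (Λ : AddSubgroup (EuclideanSpace ℝ (Fin n)))
    [DiscreteTopology Λ]
    (hspan : Submodule.span ℝ (Λ : Set (EuclideanSpace ℝ (Fin n))) = ⊤)
    (F : Set (EuclideanSpace ℝ (Fin n))) (hF : MeasurableSet F)
    (hfund : ∀ x : EuclideanSpace ℝ (Fin n),
      ∃! p : EuclideanSpace ℝ (Fin n) × EuclideanSpace ℝ (Fin n),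
        p.1 ∈ Λ ∧ p.2 ∈ F ∧ x = p.1 + p.2)
    (hvol : 0 < volume F) (hvol' : volume F < ⊤)
    (VΛ Sx G : ℝ) (hVΛ : VΛ = (volume F).toReal)
    (hSx : Sx = (1 / ((n : ℝ) * VΛ)) * ∫ x in F, ‖x‖ ^ 2)
    (hG : G = Sx / VΛ ^ ((2 : ℝ) / n))
    (Ef : Ω → EuclideanSpace ℝ (Fin n)) (hEf : Measurable Ef)
    (g g' : EuclideanSpace ℝ (Fin n) → ℝ≥0∞) (hg : Measurable g) (hg' : Measurable g')
    (hlaw : Measure.map Ef μ = volume.withDensity g)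
    (hper : ∀ x ∈ F, g' x = ∑' l : Λ, g (x + (l : EuclideanSpace ℝ (Fin n))))
    (hsupp : ∀ x ∉ F, g' x = 0)
    (hint : Integrable (fun x => (g x).toReal * Real.logb 2 (g x).toReal))
    (Sef : ℝ) (hSef : Sef = (1 / (n : ℝ)) * ∫ ω, ‖Ef ω‖ ^ 2 ∂μ)
    (hmom : Integrable (fun ω => ‖Ef ω‖ ^ 2) μ) :
    (1 / (n : ℝ)) * (Real.logb 2 VΛ - diffEntropy g') ≥
      (1 / 2) * Real.logb 2 (Sx / Sef) -
        (1 / 2) * Real.logb 2 (2 * Real.pi * Real.exp 1 * G) := by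
  have hn' : (0 : ℝ) < n := by exact_mod_cast hn
  have : Nonempty (Fin n) := ⟨⟨0, hn⟩⟩
  have hcount : Countable Λ := TopologicalSpace.separableSpace_iff_countable.mp inferInstance
  have hfd := fold_isFund Λ F hF hfund
  obtain ⟨M, hM, hMb⟩ := lattice_exp_sum_bound Λ hspan
  have hl2 : 0 < Real.log 2 := Real.log_pos one_lt_two
  have hV : 0 < VΛ := hVΛ ▸ ENNReal.toReal_pos hvol.ne' hvol'.ne
  have hg1 : ∫⁻ x, g x = 1 := by
    have h1 : Measure.map Ef μ Set.univ = 1 := by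
      rw [Measure.map_apply hEf MeasurableSet.univ]; simp
    rw [hlaw, withDensity_apply _ MeasurableSet.univ] at h1
    simpa using h1
  have hgfin : ∀ᵐ x, g x < ⊤ := ae_lt_top hg (by rw [hg1]; simp)
  have hgi : Integrable (fun x => (g x).toReal) :=
    integrable_toReal_of_lintegral_ne_top hg.aemeasurable (by rw [hg1]; simp)
  have hm2 : Integrable (fun x => (g x).toReal * ‖x‖ ^ 2) := by
    have h1 : Integrable (fun x : EuclideanSpace ℝ (Fin n) => ‖x‖ ^ 2) (Measure.map Ef μ) :=
      (integrable_map_measure (by fun_prop) hEf.aemeasurable).mpr hmom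
    rw [hlaw, integrable_withDensity_iff_integrable_smul' hg hgfin] at h1
    exact h1
  have hm2e : ∫ x, (g x).toReal * ‖x‖ ^ 2 = n * Sef := by
    have h1 : ∫ x, ‖x‖ ^ 2 ∂(Measure.map Ef μ) = ∫ ω, ‖Ef ω‖ ^ 2 ∂μ :=
      integral_map hEf.aemeasurable (by fun_prop)
    rw [hlaw, integral_withDensity_eq_integral_toReal_smul hg hgfin] at h1
    rw [hSef, ← h1]
    field_simp
    rfl
  have hm1 : Integrable (fun x => (g x).toReal * ‖x‖) := by
    refine Integrable.mono' (hgi.add hm2) (by fun_prop) (Filter.Eventually.of_forall fun x => ?_)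
    rw [Real.norm_of_nonneg (by positivity)]
    have : ‖x‖ ≤ 1 + ‖x‖ ^ 2 := by nlinarith [sq_nonneg (‖x‖ - 1), sq_nonneg ‖x‖]
    calc _ ≤ (g x).toReal * (1 + ‖x‖ ^ 2) := by gcongr
      _ = _ := by simp [mul_add]
  have hgl : Integrable (fun x => (g x).toReal * Real.log (g x).toReal) := by
    refine (hint.mul_const (Real.log 2)).congr (Filter.Eventually.of_forall fun x => ?_)
    simp only [Real.logb]
    field_simp
  have hSef0 : 0 < Sef := by
    have h0 : 0 ≤ ∫ x, (g x).toReal * ‖x‖ ^ 2 := integral_nonneg fun x => by positivity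
    rcases h0.eq_or_lt with h0 | h0
    · exfalso
      rw [eq_comm, integral_eq_zero_iff_of_nonneg (fun x => by positivity) hm2] at h0
      have hz : ∀ᵐ x : EuclideanSpace ℝ (Fin n), x ≠ 0 := by
        rw [ae_iff]; simp
      have : g =ᵐ[volume] 0 := by
        filter_upwards [h0, hz, hgfin] with x hx hx0 hxf
        have hx : (g x).toReal * ‖x‖ ^ 2 = 0 := hx
        have hne : ‖x‖ ^ 2 ≠ 0 := by simpa using hx0
        have := (mul_eq_zero.mp hx).resolve_right hne
        exact ((ENNReal.toReal_eq_zero_iff _).mp this).resolve_right hxf.ne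
      rw [lintegral_congr_ae this] at hg1
      simp at hg1
    · rw [hm2e] at h0
      exact (mul_pos_iff_of_pos_left hn').mp h0
  obtain ⟨hA1, hAi, hAle⟩ := fold_core Λ hfd M hM hMb g hg hg1 hm1 hgl _ rfl
  set A : EuclideanSpace ℝ (Fin n) → ℝ≥0∞ := fun x => ∑' l : Λ, g (x + l) with hA
  have hAm : Measurable A :=
    Measurable.tsum fun l => hg.comp (measurable_id.add_const _)
  have hD : diffEntropy g' = -(∫ x in F, (A x).toReal * Real.log (A x).toReal) / Real.log 2 := by
    have h1 : ∫ x, (g' x).toReal * Real.logb 2 (g' x).toReal =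
        ∫ x in F, (g' x).toReal * Real.logb 2 (g' x).toReal := by
      symm
      refine setIntegral_eq_integral_of_forall_compl_eq_zero fun x hx => ?_
      simp [hsupp x hx]
    rw [diffEntropy, h1, neg_div, ← integral_div]
    congr 1
    refine setIntegral_congr_fun hF fun x hx => ?_
    simp only [hper x hx, hA, Real.logb]
    ring
  have hE1 := gauss_entropy g hg hg1 hm2 hgl Sef hSef0 hm2e
  have hE2 := unif_entropy hvol hvol' A hAm hA1 hAi
  rw [← hVΛ] at hE2
  rw [hD]
  set I := ∫ x in F, (A x).toReal * Real.log (A x).toReal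
  have hI : -(n / 2) * Real.log (2 * Real.pi * Real.exp 1 * Sef) ≤ I := hE1.trans hAle
  have hpi := Real.pi_pos
  have hL : (1 / (n : ℝ)) * (Real.logb 2 VΛ - -I / Real.log 2) =
      (1 / n) * (Real.log VΛ + I) / Real.log 2 := by
    rw [Real.logb]; ring
  rw [hL]
  have hSx0 : 0 ≤ Sx := by
    rw [hSx]
    have : 0 ≤ ∫ x in F, ‖x‖ ^ 2 := integral_nonneg fun x => by positivity
    positivity
  rcases hSx0.eq_or_lt with h0 | h0
  · rw [hG, ← h0]
    simp only [zero_div, mul_zero, Real.logb_zero, sub_zero, ge_iff_le]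
    have : 0 ≤ Real.log VΛ + I := by linarith
    positivity
  · have hR : (1 / 2) * Real.logb 2 (Sx / Sef) - (1 / 2) * Real.logb 2 (2 * Real.pi * Real.exp 1 * G)
        = (1 / n) * (Real.log VΛ + -(n / 2) * Real.log (2 * Real.pi * Real.exp 1 * Sef)) / Real.log 2 := by
      have hc : 0 < 2 * Real.pi * Real.exp 1 := by positivity
      have hp : 0 < VΛ ^ ((2 : ℝ) / n) := by positivity
      rw [hG, Real.logb, Real.logb, Real.log_div h0.ne' hSef0.ne',
        Real.log_mul hc.ne' (by positivity), Real.log_div h0.ne' hp.ne', Real.log_rpow hV,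
        Real.log_mul hc.ne' hSef0.ne']
      field_simp
      ring
    rw [hR]
    gcongr
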